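/- Let D ⊆ ℂ^N be a strictly pseudoconvex domain and let γ : bD × [0,1] → cl(D) be a C² map such that γ(x,r) ∈ D for all x ∈ bD and r ∈ [0,1), γ(x,1) = x, and the curve r ↦ γ(x,r) hits bD transversally at x as r → 1, for every x ∈ bD. For r ∈ [0,1) set bD_r := {γ(x,r) : x ∈ bD}. Then for every compact set K ⊆ D there exists r_0 ∈ (0,1) such that for every r ∈ (r_0, 1), bD_r is the boundary of a strictly pseudoconvex domain contained in D that contains K. -/

import Mathlib

open Set Filter Topology Metric MeasureTheory
open scoped ENNReal NNReal InnerProductSpace ComplexConjugate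

noncomputable section

/-- `ℂ^N` with the Euclidean structure. -/
abbrev EN (N : ℕ) := EuclideanSpace ℂ (Fin N)

instance {N : ℕ} : MeasurableSpace (EN N) := borel _
instance {N : ℕ} : BorelSpace (EN N) := ⟨rfl⟩

/-- A domain: a nonempty open connected subset. -/
def IsDomainSet {N : ℕ} (D : Set (EN N)) : Prop := IsOpen D ∧ IsConnected D

/-- `u` is plurisubharmonic on `D`: upper semicontinuous on `D`, and its restriction to
every complex affine line satisfies the sub-mean value inequality on every closed disc
(of that line) contained in `D`. -/
def PlurisubharmonicOn {N : ℕ} (u : EN N → ℝ) (D : Set (EN N)) : Prop :=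
  UpperSemicontinuousOn u D ∧
  ∀ (a b : EN N) (t₀ : ℂ) (r : ℝ), 0 < r →
    (fun t : ℂ => a + t • b) '' Metric.closedBall t₀ r ⊆ D →
    u (a + t₀ • b) ≤ (2 * Real.pi)⁻¹ *
      ∫ θ in (0:ℝ)..(2 * Real.pi), u (a + (t₀ + r * Complex.exp (θ * Complex.I)) • b)

/-- `D` is a pseudoconvex domain: a domain carrying a continuous plurisubharmonic
exhaustion function. -/
def Pseudoconvex {N : ℕ} (D : Set (EN N)) : Prop :=
  IsDomainSet D ∧ ∃ u : EN N → ℝ, ContinuousOn u D ∧ PlurisubharmonicOn u D ∧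
    ∀ c : ℝ, IsCompact (closure {z ∈ D | u z < c}) ∧ closure {z ∈ D | u z < c} ⊆ D

/-- The space `𝒪(D)` of holomorphic functions on `D`, as a submodule of `ℂ^N → ℂ`. -/
def Hol {N : ℕ} (D : Set (EN N)) : Submodule ℂ (EN N → ℂ) where
  carrier := {f | DifferentiableOn ℂ f D}
  add_mem' hf hg := hf.add hg
  zero_mem' := differentiableOn_const 0
  smul_mem' c f hf := hf.const_smul c

/-- The topology of uniform convergence on compact subsets of `D`, on `𝒪(D)`. -/
instance holTopology {N : ℕ} (D : Set (EN N)) : TopologicalSpace ↥(Hol D) :=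
  TopologicalSpace.induced
    (fun f => UniformOnFun.ofFun {K : Set (EN N) | K ⊆ D ∧ IsCompact K} f.1)
    inferInstance

/-- A set is residual if it contains a dense `G_δ` set. -/
def ResidualIn {X : Type*} [TopologicalSpace X] (S : Set X) : Prop :=
  ∃ T : Set X, T ⊆ S ∧ IsGδ T ∧ Dense T

/-- `S` is densely lineable: `S ∪ {0}` contains a dense vector subspace. -/
def DenselyLineableIn {X : Type*} [TopologicalSpace X] [AddCommMonoid X] [Module ℂ X]
    (S : Set X) : Prop :=
  ∃ p : Submodule ℂ X, Dense (p : Set X) ∧ (p : Set X) ⊆ S ∪ {0}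

/-- `S` is spaceable: `S ∪ {0}` contains a closed infinite-dimensional vector subspace. -/
def SpaceableIn {X : Type*} [TopologicalSpace X] [AddCommMonoid X] [Module ℂ X]
    (S : Set X) : Prop :=
  ∃ p : Submodule ℂ X, IsClosed (p : Set X) ∧ ¬ Module.Finite ℂ ↥p ∧ (p : Set X) ⊆ S ∪ {0}

/-- A finite length path to `bD`: continuous and piecewise `C¹` on `[0,1)`, with values in `D`,
finite length (total variation), converging to a boundary point of `D` as `r → 1`. -/
def FiniteLengthPathTo {N : ℕ} (D : Set (EN N)) (γ : ℝ → EN N) : Prop :=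
  MapsTo γ (Ico (0:ℝ) 1) D ∧ ContinuousOn γ (Ico (0:ℝ) 1) ∧
  (∃ u : ℕ → ℝ, u 0 = 0 ∧ StrictMono u ∧ (∀ n, u n < 1) ∧ Tendsto u atTop (𝓝 1) ∧
    ∀ n, ContDiffOn ℝ 1 γ (Icc (u n) (u (n+1)))) ∧
  eVariationOn γ (Ico (0:ℝ) 1) < ⊤ ∧
  ∃ ζ ∈ frontier D, Tendsto γ (𝓝[<] (1:ℝ)) (𝓝 ζ)

/-- The set of `f ∈ 𝒪(D)` with maximal cluster set along every finite length path to `bD`. -/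
def WildSet {N : ℕ} (D : Set (EN N)) : Set ↥(Hol D) :=
  {f | ∀ γ : ℝ → EN N, FiniteLengthPathTo D γ → ∀ c : ℂ,
    ∃ r : ℕ → ℝ, (∀ n, r n ∈ Ico (0:ℝ) 1) ∧ Tendsto r atTop (𝓝 1) ∧
      Tendsto (fun n => f.1 (γ (r n))) atTop (𝓝 c)}

/-- The `𝒪(D)`-hull of `K`. -/
def holHull {N : ℕ} (D K : Set (EN N)) : Set (EN N) :=
  {z ∈ D | ∀ φ : EN N → ℂ, DifferentiableOn ℂ φ D → ‖φ z‖ ≤ ⨆ w ∈ K, ‖φ w‖}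

/-- `K` is `𝒪(D)`-convex. -/
def HolConvexIn {N : ℕ} (D K : Set (EN N)) : Prop := K ⊆ D ∧ holHull D K = K

/-- The polynomial hull of a compact subset of `ℂ`. -/
def polyHull1 (E : Set ℂ) : Set ℂ :=
  {z | ∀ p : Polynomial ℂ, ‖p.eval z‖ ≤ ⨆ w ∈ E, ‖p.eval w‖}

/-- The polynomial hull of a subset of `ℂ^N`. -/
def polyHull {N : ℕ} (E : Set (EN N)) : Set (EN N) :=
  {z | ∀ p : MvPolynomial (Fin N) ℂ,
    ‖MvPolynomial.eval (fun j => z j) p‖ ≤ ⨆ w ∈ E, ‖MvPolynomial.eval (fun j => w j) p‖}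

/-- `E ⊆ ℂ^N` is polynomially convex. -/
def PolynomiallyConvex {N : ℕ} (E : Set (EN N)) : Prop := polyHull E = E

/-- The (real) Hessian of `ρ` at `p`, applied to the pair `(v, w)`. -/
def Hess {N : ℕ} (ρ : EN N → ℝ) (p v w : EN N) : ℝ :=
  fderiv ℝ (fderiv ℝ ρ) p v w

/-- The Levi form `∑_{j,k} ∂²ρ/∂z_j∂z̄_k (p) w_j w̄_k`, expressed through the real Hessian. -/
def LeviForm {N : ℕ} (ρ : EN N → ℝ) (p w : EN N) : ℝ :=
  (Hess ρ p w w + Hess ρ p (Complex.I • w) (Complex.I • w)) / 4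

/-- `w` belongs to the complex tangent space `{w : ∑_j ∂ρ/∂z_j(p) w_j = 0}` at `p`. -/
def ComplexTangent {N : ℕ} (ρ : EN N → ℝ) (p w : EN N) : Prop :=
  fderiv ℝ ρ p w = 0 ∧ fderiv ℝ ρ p (Complex.I • w) = 0

/-- `ρ` is a `C²` defining function for `D` on the open neighborhood `V` of `cl D`. -/
def IsDefiningFunctionOn {N : ℕ} (D : Set (EN N)) (ρ : EN N → ℝ) (V : Set (EN N)) : Prop :=
  IsOpen V ∧ closure D ⊆ V ∧ ContDiffOn ℝ 2 ρ V ∧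
  D = {z ∈ V | ρ z < 0} ∧ ∀ p ∈ frontier D, fderiv ℝ ρ p ≠ 0

/-- `D` is a strictly pseudoconvex domain with defining function `ρ`. -/
def StrictPSCWith {N : ℕ} (D : Set (EN N)) (ρ : EN N → ℝ) : Prop :=
  IsDomainSet D ∧ Bornology.IsBounded D ∧ (∃ V, IsDefiningFunctionOn D ρ V) ∧
  ∀ p ∈ frontier D, ∀ w : EN N, w ≠ 0 → ComplexTangent ρ p w → 0 < LeviForm ρ p w

/-- `D` is a strictly pseudoconvex domain. -/
def StrictlyPseudoconvex {N : ℕ} (D : Set (EN N)) : Prop := ∃ ρ, StrictPSCWith D ρ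

/-- `ρ` and `σ` are at `C²`-distance `< ε` on `V`. -/
def C2DistLt {N : ℕ} (V : Set (EN N)) (ρ σ : EN N → ℝ) (ε : ℝ) : Prop :=
  ∀ z ∈ V, |ρ z - σ z| + ‖fderiv ℝ ρ z - fderiv ℝ σ z‖ +
    ‖fderiv ℝ (fderiv ℝ ρ) z - fderiv ℝ (fderiv ℝ σ) z‖ < ε

/-- The standing assumptions on the map `γ : bD × [0,1] → cl D`: it is `C^k`, maps
`bD × [0,1)` into `D`, satisfies `γ(x,1) = x`, and the curves `r ↦ γ(x,r)` hit `bD`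
transversally at `x` (the `r`-derivative at `1` is not annihilated by `dρ(x)`,
i.e. it is not tangent to `bD` at `x`). -/
def GammaMap {N : ℕ} (D : Set (EN N)) (ρ : EN N → ℝ) (γ : EN N × ℝ → EN N) (k : ℕ) : Prop :=
  ContDiffOn ℝ k γ ((frontier D) ×ˢ Icc (0:ℝ) 1) ∧
  (∀ x ∈ frontier D, ∀ r ∈ Ico (0:ℝ) 1, γ (x, r) ∈ D) ∧
  (∀ x ∈ frontier D, γ (x, 1) = x) ∧
  ∀ x ∈ frontier D, fderiv ℝ ρ x (derivWithin (fun r => γ (x, r)) (Icc (0:ℝ) 1) 1) ≠ 0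

/-- Assumption (†): for all `r` close enough to `1`, `bD_r := γ(bD × {r})` bounds a strictly
pseudoconvex domain `D_r ⊆ D` whose defining function converges to `ρ` in `C²` norm on a
neighborhood `V` of `cl D` as `r → 1`. -/
def Dagger {N : ℕ} (D : Set (EN N)) (ρ : EN N → ℝ) (γ : EN N × ℝ → EN N) : Prop :=
  ∃ V : Set (EN N), IsOpen V ∧ closure D ⊆ V ∧
  ∃ (Dr : ℝ → Set (EN N)) (ρr : ℝ → EN N → ℝ),
    ∀ ε > 0, ∃ r₀ ∈ Ico (0:ℝ) 1, ∀ r ∈ Ioo r₀ 1,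
      StrictPSCWith (Dr r) (ρr r) ∧ Dr r ⊆ D ∧
      frontier (Dr r) = (fun x => γ (x, r)) '' frontier D ∧
      C2DistLt V (ρr r) ρ ε

/-- The `(2N-1)`-dimensional Hausdorff (surface) measure on `bD`. -/
def surfMeasure {N : ℕ} (D : Set (EN N)) : Measure (EN N) :=
  (Measure.hausdorffMeasure (2 * (N:ℝ) - 1)).restrict (frontier D)

/-- The normalized surface measure on `bD`. -/
def surfMeasureNorm {N : ℕ} (D : Set (EN N)) : Measure (EN N) :=
  ((Measure.hausdorffMeasure (2 * (N:ℝ) - 1) : Measure (EN N)) (frontier D))⁻¹ • surfMeasure D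

/-- The set `𝒲((r_j))` of `f ∈ 𝒪(D)` such that every measurable function on `bD` is an
a.e. limit of `f ∘ γ(·, r_{j_k})` along some subsequence of `(r_j)`. -/
def WSet {N : ℕ} (D : Set (EN N)) (γ : EN N × ℝ → EN N) (r : ℕ → ℝ) : Set ↥(Hol D) :=
  {f | ∀ h : EN N → ℂ, Measurable h → ∃ φ : ℕ → ℕ, StrictMono φ ∧
    ∀ᵐ x ∂ surfMeasure D, Tendsto (fun k => f.1 (γ (x, r (φ k)))) atTop (𝓝 (h x))}

/-- `Γ` is a closed cap of a convex set `V`: the closure of a connected component of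
`V \ H` for some real affine hyperplane `H` (for convex `V`, a nonempty open half-space
slice of `V`). -/
def IsClosedCap {N : ℕ} (V : Set (EN N)) (Γ : Set (EN N)) : Prop :=
  ∃ (l : EN N →L[ℝ] ℝ) (c : ℝ), l ≠ 0 ∧ (V ∩ {z | c < l z}).Nonempty ∧
    Γ = closure (V ∩ {z | c < l z})

/-- `V` is a strictly convex domain: a bounded convex domain with `C²` boundary whose
defining function has positive definite real Hessian on the real tangent space. -/
def StrictlyConvexDomain {N : ℕ} (V : Set (EN N)) : Prop :=
  IsDomainSet V ∧ Bornology.IsBounded V ∧ Convex ℝ V ∧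
  ∃ (ρ : EN N → ℝ) (W : Set (EN N)), IsDefiningFunctionOn V ρ W ∧
    ∀ p ∈ frontier V, ∀ w : EN N, w ≠ 0 → fderiv ℝ ρ p w = 0 → 0 < Hess ρ p w w

/-- The defining function `‖z‖² - 1` of the unit ball. -/
def ballRho {N : ℕ} : EN N → ℝ := fun z => ‖z‖ ^ 2 - 1

/-- The normalized surface measure on the unit sphere of `ℂ^N`. -/
def sphMeasure (N : ℕ) : Measure (EN N) :=
  ((Measure.hausdorffMeasure (2 * (N:ℝ) - 1) : Measure (EN N)) (Metric.sphere 0 1))⁻¹ •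
    (Measure.hausdorffMeasure (2 * (N:ℝ) - 1)).restrict (Metric.sphere 0 1)

/-- `v` is a weight: increasing on `[0,∞)`, nonnegative, and tending to `∞`. -/
def IsWeight (v : ℝ → ℝ) : Prop :=
  (∀ x ∈ Ici (0:ℝ), 0 ≤ v x) ∧ MonotoneOn v (Ici 0) ∧ Tendsto v atTop atTop

/-- The norm `‖f‖ = sup_{z ∈ 𝔹_N} |f z| / v(|z|)` of `H_v^0`. -/
def hvNorm {N : ℕ} (v : ℝ → ℝ) (f : EN N → ℂ) : ℝ :=
  ⨆ z ∈ Metric.ball (0:EN N) 1, ‖f z‖ / v ‖z‖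

/-- Membership in `H_v^0`: `f` is holomorphic on `𝔹_N` and `sup_{|z|=r} |f z| / v(r) → 0`
as `r → 1⁻`. -/
def MemHv {N : ℕ} (v : ℝ → ℝ) (f : EN N → ℂ) : Prop :=
  DifferentiableOn ℂ f (Metric.ball 0 1) ∧
  Tendsto (fun r : ℝ => ⨆ z ∈ Metric.sphere (0:EN N) r, ‖f z‖ / v r) (𝓝[<] 1) (𝓝 0)

/-- `S` contains, relatively to `H_v^0` with its norm topology, a dense `G_δ` subset:
there are countably many relatively norm-open sets `U n` whose intersection with `H_v^0`
is norm-dense in `H_v^0` and contained in `S`. -/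
def ResidualInHv {N : ℕ} (v : ℝ → ℝ) (S : Set (EN N → ℂ)) : Prop :=
  ∃ U : ℕ → Set (EN N → ℂ),
    (∀ n, ∀ f, MemHv v f → f ∈ U n →
      ∃ δ > 0, ∀ g, MemHv v g → hvNorm v (g - f) < δ → g ∈ U n) ∧
    (∀ f, MemHv v f → ∀ δ > 0, ∃ g, MemHv v g ∧ (∀ n, g ∈ U n) ∧ hvNorm v (g - f) < δ) ∧
    ∀ f, MemHv v f → (∀ n, f ∈ U n) → f ∈ S

/-- `S` is densely lineable in `H_v^0`: `S ∪ {0}` contains a norm-dense subspace of `H_v^0`. -/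
def DenselyLineableInHv {N : ℕ} (v : ℝ → ℝ) (S : Set (EN N → ℂ)) : Prop :=
  ∃ p : Submodule ℂ (EN N → ℂ), (↑p ⊆ {f : EN N → ℂ | MemHv v f}) ∧ (↑p ⊆ S ∪ {0}) ∧
    ∀ f, MemHv v f → ∀ δ > 0, ∃ g ∈ p, hvNorm v (g - f) < δ

/-- `S` is spaceable in `H_v^0`: `S ∪ {0}` contains a norm-closed infinite-dimensional
subspace of `H_v^0`. -/
def SpaceableInHv {N : ℕ} (v : ℝ → ℝ) (S : Set (EN N → ℂ)) : Prop :=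
  ∃ p : Submodule ℂ (EN N → ℂ), (↑p ⊆ {f : EN N → ℂ | MemHv v f}) ∧ (↑p ⊆ S ∪ {0}) ∧
    ¬ Module.Finite ℂ ↥p ∧
    ∀ f, MemHv v f → (∀ δ > 0, ∃ g ∈ p, hvNorm v (g - f) < δ) → f ∈ p

/-- The standing assumptions on the family `{γ_z : z ∈ 𝔹_N}`: each `γ_z` is a `C¹` map
`b𝔹_N × [0,1] → cl 𝔹_N` into `𝔹_N` for `r < 1` with `γ_z(x,1) = x`, transversal approach
and (†), with joint continuity of `(z,x,r) ↦ γ_z(x,r)` and of `(z,r) ↦ ∂γ_z(x,r)/∂r`. -/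
def BallGammaFamily {N : ℕ} (γ : EN N → EN N × ℝ → EN N) : Prop :=
  (∀ z ∈ Metric.ball (0:EN N) 1,
    GammaMap (Metric.ball 0 1) ballRho (γ z) 1 ∧ Dagger (Metric.ball 0 1) ballRho (γ z)) ∧
  ContinuousOn (fun p : EN N × (EN N × ℝ) => γ p.1 p.2)
    (Metric.ball 0 1 ×ˢ (Metric.sphere 0 1 ×ˢ Icc (0:ℝ) 1)) ∧
  ∀ x ∈ Metric.sphere (0:EN N) 1,
    ContinuousOn (fun p : EN N × ℝ => derivWithin (fun r => γ p.1 (x, r)) (Icc (0:ℝ) 1) p.2)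
      (Metric.ball 0 1 ×ˢ Icc (0:ℝ) 1)

/-- The set of `f` such that for every `z ∈ 𝔹_N`, every measurable function on `b𝔹_N` is an
a.e. limit of `f ∘ γ_z(·, r_{j_k})` along some subsequence of `(r_j)`. -/
def WSetHv {N : ℕ} (γ : EN N → EN N × ℝ → EN N) (r : ℕ → ℝ) : Set (EN N → ℂ) :=
  {f | ∀ z ∈ Metric.ball (0:EN N) 1, ∀ h : EN N → ℂ, Measurable h →
    ∃ φ : ℕ → ℕ, StrictMono φ ∧
      ∀ᵐ x ∂ sphMeasure N, Tendsto (fun k => f (γ z (x, r (φ k)))) atTop (𝓝 (h x))}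

/-- The set `E_L^* = {γ_z(x,r) : x ∈ E, r ∈ [0,1], z ∈ L}`. -/
def EStarSet {N : ℕ} (γ : EN N → EN N × ℝ → EN N) (L E : Set (EN N)) : Set (EN N) :=
  {w | ∃ z ∈ L, ∃ x ∈ E, ∃ r ∈ Icc (0:ℝ) 1, w = γ z (x, r)}

/-- The Korányi approach region `D_α(x)`. -/
def Koranyi {N : ℕ} (α : ℝ) (x : EN N) : Set (EN N) :=
  {z ∈ Metric.ball (0:EN N) 1 | ‖1 - (⟪x, z⟫_ℂ : ℂ)‖ < α / 2 * (1 - ‖z‖ ^ 2)}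

/-- `h` has a `K`-limit at `x`: for every `α > 1` the values of `h` converge along every
sequence in `D_α(x)` converging to `x`. -/
def HasKLimitAt {N : ℕ} (h : EN N → ℂ) (x : EN N) : Prop :=
  ∀ α > (1:ℝ), ∃ c : ℂ, ∀ z : ℕ → EN N, (∀ i, z i ∈ Koranyi α x) →
    Tendsto z atTop (𝓝 x) → Tendsto (fun i => h (z i)) atTop (𝓝 c)

/-- The circle `bL_x = L_x ∩ b𝔹_N` cut out on the complex line through `x` and `0`. -/
def lineCircle {N : ℕ} (x : EN N) : Set (EN N) :=
  {z | ∃ t : ℂ, z = t • x} ∩ Metric.sphere 0 1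

end

/-!
For `r` close to `1` the displacement `γ(x, r) - x` of `bD` is `C²`-small. Local `C²` retractions
onto `bD`, given by the implicit function theorem, extend it to the ambient space, and after a
reparametrization with vanishing speed at `r = 1` it generates diffeomorphisms `Φ_s` of `ℂ^N` with
`Φ_0 = id` that carry `bD` onto `bD_r`. Take `D' = Φ_s(D)`, with defining function `ρ ∘ Φ_s⁻¹`. The
Levi condition is open in the `C²` topology and `bD` is compact, so it survives for small `s`, and
`K ⊆ D'` because `Φ_s` is close to the identity. Finally `D' ⊆ D`: since `bD' = bD_r ⊆ D`, the
function `ρ` would otherwise have a local maximum at a point of `D' \ D`; all these points are close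
to `bD`, where `dρ ≠ 0`.
-/

section LocalRetract

variable {E F : Type*} [NormedAddCommGroup E] [NormedSpace ℝ E] [NormedAddCommGroup F]
  [NormedSpace ℝ F] {B : Set E}

/-- `B` is a `C^n` neighbourhood retract near each of its points. This is the only trace of the
smoothness of `bD` needed to extend to the ambient space a map given on `bD`. -/
def IsLocalRetract (n : WithTop ℕ∞) (B : Set E) : Prop :=
  ∀ x ∈ B, ∃ U ∈ 𝓝 x, ∃ π : E → E, ContDiffOn ℝ n π U ∧ MapsTo π U B ∧ ∀ z ∈ U ∩ B, π z = z

theorem IsLocalRetract.prod_univ {n : WithTop ℕ∞} (hB : IsLocalRetract n B) :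
    IsLocalRetract n (B ×ˢ (univ : Set F)) := by
  rintro ⟨x, t⟩ ⟨hx, -⟩
  obtain ⟨U, hU, π, hπ, hmaps, hfix⟩ := hB x hx
  refine ⟨U ×ˢ univ, prod_mem_nhds hU univ_mem, Prod.map π id, hπ.prodMap contDiffOn_id,
    hmaps.prodMap (mapsTo_univ _ _), ?_⟩
  rintro ⟨z, s⟩ ⟨⟨hzU, -⟩, hzB, -⟩
  exact Prod.ext (hfix z ⟨hzU, hzB⟩) rfl

theorem IsLocalRetract.exists_contDiff_eqOn [FiniteDimensional ℝ E] {n : ℕ∞}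
    (hB : IsLocalRetract n B) (hBc : IsClosed B) {f : E → F} (hf : ContDiffOn ℝ n f B) :
    ∃ g : E → F, ContDiff ℝ n g ∧ EqOn g f B := by
  have hconvex (x : E) : Convex ℝ {v : F | x ∈ B → v = f x} := by
    by_cases hx : x ∈ B
    · simp [hx, convex_singleton]
    · simp [hx, convex_univ]
  obtain ⟨g, hg⟩ := exists_contMDiffMap_forall_mem_convex_of_local (n := n)
    (modelWithCornersSelf ℝ E) hconvex fun x => by
      by_cases hx : x ∈ B
      · obtain ⟨U, hU, π, hπ, hmaps, hfix⟩ := hB x hx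
        exact ⟨U, hU, f ∘ π, contMDiffOn_iff_contDiffOn.2 (hf.comp hπ hmaps),
          fun y hyU hyB => congrArg f (hfix y ⟨hyU, hyB⟩)⟩
      · exact ⟨Bᶜ, hBc.isOpen_compl.mem_nhds hx, 0, contMDiffOn_const,
          fun y hy hyB => absurd hyB hy⟩
  exact ⟨g, g.contMDiff.contDiff, hg⟩

theorem IsLocalRetract.exists_contDiff_extension_prod [FiniteDimensional ℝ E] {n : ℕ∞}
    (hB : IsLocalRetract n B) (hBc : IsCompact B) {h : E × ℝ → F}
    (hh : ContDiffOn ℝ n h (B ×ˢ univ)) (h0 : ∀ x ∈ B, h (x, 0) = 0) :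
    ∃ H : E × ℝ → F, ContDiff ℝ n H ∧ EqOn H h (B ×ˢ univ) ∧ (∀ z, H (z, 0) = 0) ∧
      ∃ R, ∀ p : E × ℝ, R ≤ ‖p.1‖ → H p = 0 := by
  obtain ⟨g, hg, hgh⟩ :=
    hB.prod_univ.exists_contDiff_eqOn (hBc.isClosed.prod isClosed_univ) hh
  obtain ⟨R, hR, hBR⟩ := hBc.isBounded.exists_pos_norm_le
  let χ : ContDiffBump (0 : E) := ⟨R, R + 1, hR, lt_add_one R⟩
  have hχB : ∀ x ∈ B, χ x = 1 := fun x hx =>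
    χ.one_of_mem_closedBall (mem_closedBall_zero_iff.2 (hBR x hx))
  refine ⟨fun p => χ p.1 • (g p - g (p.1, 0)), ?_, ?_, ?_, R + 1, fun p hp => ?_⟩
  · exact (χ.contDiff.comp contDiff_fst).smul
      (hg.sub (hg.comp (contDiff_fst.prodMk contDiff_const)))
  · rintro ⟨x, s⟩ ⟨hx, hs⟩
    simp only [hχB x hx, one_smul, hgh (mk_mem_prod hx hs), hgh (mk_mem_prod hx (mem_univ 0)),
      h0 x hx, sub_zero]
  · exact fun z => by simp only [sub_self, smul_zero]
  · simp only [χ.zero_of_le_dist ((dist_zero_right p.1).symm ▸ hp), zero_smul]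

end LocalRetract

section LevelSetRetraction

theorem isInvertible_of_apply_one_ne_zero {𝕜 : Type*} [Field 𝕜] [TopologicalSpace 𝕜]
    [ContinuousMul 𝕜] {A : 𝕜 →L[𝕜] 𝕜} (hA : A 1 ≠ 0) : A.IsInvertible := by
  refine ⟨ContinuousLinearEquiv.unitsEquivAut 𝕜 (Units.mk0 (A 1) hA), ?_⟩
  ext
  simp

/-- Retract along a fixed direction `v` with `dρ(x₀) v ≠ 0`: the implicit function theorem solves
`ρ (z + t v) = ρ x₀` for `t`. -/
theorem exists_retraction_onto_level_set {E : Type*} [NormedAddCommGroup E] [NormedSpace ℝ E]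
    [CompleteSpace E] {ρ : E → ℝ} {x₀ : E} {n : WithTop ℕ∞} (hn : n ≠ 0)
    (hρ : ContDiffAt ℝ n ρ x₀) (hdρ : fderiv ℝ ρ x₀ ≠ 0) :
    ∃ π : E → E, ContDiffAt ℝ n π x₀ ∧ (∀ᶠ z in 𝓝 x₀, ρ (π z) = ρ x₀) ∧
      ∀ᶠ z in 𝓝 x₀, ρ z = ρ x₀ → π z = z := by
  obtain ⟨v, hv⟩ := DFunLike.ne_iff.1 hdρ
  let shift : E × ℝ →L[ℝ] E := .fst ℝ E ℝ + (ContinuousLinearMap.snd ℝ E ℝ).smulRight v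
  have hshift (z : E) (t : ℝ) : shift (z, t) = z + t • v := by simp [shift]
  have hshift₀ (z : E) : shift (z, 0) = z := by simp [shift]
  have hf : ContDiffAt ℝ n (ρ ∘ shift) (x₀, 0) :=
    ContDiffAt.comp _ (by rwa [hshift₀]) shift.contDiff.contDiffAt
  have hfderiv : fderiv ℝ (ρ ∘ shift) (x₀, 0) = fderiv ℝ ρ x₀ ∘L shift := by
    rw [fderiv_comp _ (by rw [hshift₀]; exact hρ.differentiableAt hn) shift.differentiableAt,
      shift.fderiv, hshift₀]
  have hinv : (fderiv ℝ (ρ ∘ shift) (x₀, 0) ∘L .inr ℝ E ℝ).IsInvertible :=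
    isInvertible_of_apply_one_ne_zero (by simpa [hfderiv, hshift] using hv)
  let ψ := hf.implicitFunction hn hinv
  refine ⟨fun z => shift (z, ψ z), ?_, ?_, ?_⟩
  · exact shift.contDiff.contDiffAt.comp x₀
      (contDiffAt_id.prodMk (hf.contDiffAt_implicitFunction hn hinv))
  · simpa only [Function.comp_apply, hshift₀] using hf.eventually_apply_implicitFunction hn hinv
  · have hslice : Tendsto (fun z : E => (z, (0 : ℝ))) (𝓝 x₀) (𝓝 (x₀, 0)) :=
      Continuous.tendsto (by fun_prop) x₀
    filter_upwards [hslice.eventually (hf.eventually_apply_eq_iff_implicitFunction hn hinv)]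
      with z hz hzρ
    have hψz : ψ z = 0 := hz.1 (by simpa only [Function.comp_apply, hshift₀] using hzρ)
    simp only [hψz, hshift₀]

end LevelSetRetraction

section SmallDisplacement

variable {E F : Type*} [NormedAddCommGroup E] [NormedSpace ℝ E] [NormedAddCommGroup F]
  [NormedSpace ℝ F]

theorem hasFDerivAt_comp_sq_snd_zero {H : E × ℝ → F} (h0 : ∀ z, H (z, 0) = 0) {z : E}
    (hH : DifferentiableAt ℝ H (z, 0)) :
    HasFDerivAt (fun p : E × ℝ => H (p.1, p.2 ^ 2)) (0 : E × ℝ →L[ℝ] F) (z, 0) := by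
  have hslice : fderiv ℝ H (z, 0) ∘L .inl ℝ E ℝ = (0 : E →L[ℝ] F) := by
    refine (hH.hasFDerivAt.comp z (hasFDerivAt_prodMk_left z (0 : ℝ))).unique ?_
    simpa only [Function.comp_def, h0] using hasFDerivAt_const (0 : F) z
  have hsq : HasFDerivAt (fun p : E × ℝ => (p.1, p.2 ^ 2))
      (.inl ℝ E ℝ ∘L .fst ℝ E ℝ) (z, (0 : ℝ)) := by
    refine (hasFDerivAt_fst.prodMk (hasFDerivAt_snd.pow 2)).congr_fderiv ?_
    ext <;> simp
  have hH' : HasFDerivAt H (fderiv ℝ H (z, 0)) (z, (0 : ℝ) ^ 2) := by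
    simpa only [zero_pow two_ne_zero] using hH.hasFDerivAt
  refine (hH'.comp (z, (0 : ℝ)) hsq).congr_fderiv ?_
  rw [← ContinuousLinearMap.comp_assoc, hslice, ContinuousLinearMap.zero_comp]

theorem exists_lipschitzOnWith_strip [ProperSpace E] {G : E × ℝ → F} (hG : ContDiff ℝ 1 G)
    (hG0 : ∀ z, fderiv ℝ G (z, 0) = 0) {R : ℝ} (hGR : ∀ p : E × ℝ, R ≤ ‖p.1‖ → G p = 0)
    {C : ℝ≥0} (hC : 0 < C) :
    ∃ δ > 0, LipschitzOnWith C G (univ ×ˢ Icc (-δ) δ) := by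
  have hcont : Continuous (fderiv ℝ G) := hG.continuous_fderiv one_ne_zero
  have hsmall : ∀ᶠ s in 𝓝 (0 : ℝ), ∀ z ∈ closedBall (0 : E) R, ‖fderiv ℝ G (z, s)‖₊ ≤ C := by
    refine (isCompact_closedBall 0 R).eventually_forall_of_forall_eventually fun z _ => ?_
    have hlim : Tendsto (fun q : ℝ × E => ‖fderiv ℝ G (q.2, q.1)‖₊) (𝓝 (0, z)) (𝓝 0) := by
      have hswap : Continuous fun q : ℝ × E => ‖fderiv ℝ G (q.2, q.1)‖₊ :=
        (hcont.comp continuous_swap).nnnorm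
      simpa only [hG0, nnnorm_zero] using hswap.tendsto (0, z)
    exact hlim.eventually (ge_mem_nhds hC)
  have houtside (z : E) (s : ℝ) (hz : z ∉ closedBall (0 : E) R) : fderiv ℝ G (z, s) = 0 := by
    have hfar : ∀ᶠ p : E × ℝ in 𝓝 (z, s), R < ‖p.1‖ :=
      continuousAt_fst.norm.eventually (lt_mem_nhds (by simpa using hz))
    have hGz : G =ᶠ[𝓝 (z, s)] fun _ => 0 := hfar.mono fun p hp => hGR p hp.le
    rw [hGz.fderiv_eq, fderiv_const_apply]
  obtain ⟨ε, hε, hball⟩ := nhds_basis_closedBall.eventually_iff.1 hsmall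
  refine ⟨ε, hε, (convex_univ.prod (convex_Icc _ _)).lipschitzOnWith_of_nnnorm_fderiv_le
    (𝕜 := ℝ) (fun p _ => hG.differentiable one_ne_zero p) ?_⟩
  rintro ⟨z, s⟩ ⟨-, hs⟩
  by_cases hz : z ∈ closedBall (0 : E) R
  · exact hball (by rwa [mem_closedBall_zero_iff, Real.norm_eq_abs, abs_le]) z hz
  · simp only [houtside z s hz, nnnorm_zero, zero_le]

/-- Squaring the parameter kills the derivative of `H` along `E × {0}`, so the Lipschitz constant
is small on a thin strip; the sine keeps the parameter inside that strip. -/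
theorem exists_lipschitzWith_comp_sin_sq [ProperSpace E] {H : E × ℝ → F} (hH : ContDiff ℝ 1 H)
    (h0 : ∀ z, H (z, 0) = 0) {R : ℝ} (hR : ∀ p : E × ℝ, R ≤ ‖p.1‖ → H p = 0)
    {C : ℝ≥0} (hC : 0 < C) :
    ∃ δ > 0, LipschitzWith C fun p : E × ℝ => H (p.1, (δ * Real.sin p.2) ^ 2) := by
  obtain ⟨ε, hε, hLip⟩ := exists_lipschitzOnWith_strip (G := fun p : E × ℝ => H (p.1, p.2 ^ 2))
    (hH.comp (contDiff_fst.prodMk (contDiff_snd.pow 2)))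
    (fun z => (hasFDerivAt_comp_sq_snd_zero h0 (hH.differentiable one_ne_zero _)).fderiv)
    (fun p hp => hR _ hp) hC
  obtain ⟨δ, hδ, hδε, hδ1⟩ : ∃ δ > 0, δ ≤ ε ∧ δ ≤ 1 :=
    ⟨min ε 1, lt_min hε one_pos, min_le_left ε 1, min_le_right ε 1⟩
  have hsin : LipschitzWith 1 fun p : E × ℝ => (p.1, δ * Real.sin p.2) := by
    have hδsin : LipschitzWith 1 fun s : ℝ => δ * Real.sin s := by
      refine ((lipschitzWith_smul δ).comp Real.lipschitzWith_sin).weaken ?_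
      rwa [mul_one, ← NNReal.coe_le_coe, coe_nnnorm, Real.norm_of_nonneg hδ.le, NNReal.coe_one]
    simpa using LipschitzWith.prod_fst.prodMk (hδsin.comp LipschitzWith.prod_snd)
  have hmaps : MapsTo (fun p : E × ℝ => (p.1, δ * Real.sin p.2)) univ
      (univ ×ˢ Icc (-ε) ε) := by
    refine fun p _ => ⟨mem_univ _, abs_le.1 ?_⟩
    calc |δ * Real.sin p.2| = δ * |Real.sin p.2| := by rw [abs_mul, abs_of_pos hδ]
      _ ≤ δ * 1 := by gcongr; exact Real.abs_sin_le_one _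
      _ ≤ ε := by rwa [mul_one]
  refine ⟨δ, hδ, ?_⟩
  simpa only [lipschitzOnWith_univ, mul_one, Function.comp_def] using
    hLip.comp hsin.lipschitzOnWith hmaps

end SmallDisplacement

section AmbientIsotopy

theorem exists_homeomorph_id_add {F : Type*} [NormedAddCommGroup F] [NormedSpace ℝ F]
    [CompleteSpace F] {n : WithTop ℕ∞} (hn : n ≠ 0) {J : F → F} (hJ : ContDiff ℝ n J) {C : ℝ≥0}
    (hC : C < 1) (hLip : LipschitzWith C J) :
    ∃ Ψ : F ≃ₜ F, (∀ p, Ψ p = p + J p) ∧ ContDiff ℝ n Ψ.symm := by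
  have happrox : ApproximatesLinearOn (fun p => p + J p)
      (ContinuousLinearEquiv.refl ℝ F : F →L[ℝ] F) univ C := fun p _ q _ => by
    have hdiff : p + J p - (q + J q) - (p - q) = J p - J q := by abel
    simpa [hdiff, dist_eq_norm] using hLip.dist_le_mul p q
  have hsmall : Subsingleton F ∨
      C < ‖((ContinuousLinearEquiv.refl ℝ F).symm : F →L[ℝ] F)‖₊⁻¹ :=
    (subsingleton_or_nontrivial F).imp_right fun (_ : Nontrivial F) => by simpa using hC
  let Ψ : F ≃ₜ F := happrox.toHomeomorph _ hsmall
  have hJnorm (a : F) : ‖-fderiv ℝ J a‖ < 1 := by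
    rw [norm_neg]
    exact (norm_fderiv_le_of_lipschitz ℝ hLip).trans_lt hC
  let Ψ' (a : F) : F ≃L[ℝ] F := .unitsEquiv ℝ F (Units.oneSub (-fderiv ℝ J a) (hJnorm a))
  have hΨ' (a : F) : HasFDerivAt Ψ (Ψ' a : F →L[ℝ] F) a := by
    refine ((hasFDerivAt_id a).add (hJ.differentiable hn a).hasFDerivAt).congr_fderiv ?_
    ext w
    simp [Ψ']
  exact ⟨Ψ, fun _ => rfl, Ψ.contDiff_symm hΨ' (contDiff_id.add hJ)⟩

/-- A family `Φ s`, `s ∈ ℝ`, of `C^n` diffeomorphisms of `E` starting at the identity, such that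
`Φ s z` and `(Φ s)⁻¹ z` are jointly `C^n` in `(z, s)`. It moves a domain together with its boundary
and its defining function. -/
structure AmbientIsotopy (n : WithTop ℕ∞) (E : Type*) [NormedAddCommGroup E]
    [NormedSpace ℝ E] where
  toHomeomorph : ℝ → E ≃ₜ E
  toHomeomorph_zero (z : E) : toHomeomorph 0 z = z
  contDiff_uncurry : ContDiff ℝ n fun p : E × ℝ => toHomeomorph p.2 p.1
  contDiff_symm_uncurry : ContDiff ℝ n fun p : E × ℝ => (toHomeomorph p.2).symm p.1

namespace AmbientIsotopy

variable {n : WithTop ℕ∞} {E : Type*} [NormedAddCommGroup E] [NormedSpace ℝ E]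

instance : CoeFun (AmbientIsotopy n E) fun _ => ℝ → E ≃ₜ E := ⟨toHomeomorph⟩

theorem symm_zero_apply (Φ : AmbientIsotopy n E) (z : E) : (Φ 0).symm z = z := by
  rw [Homeomorph.symm_apply_eq, Φ.toHomeomorph_zero]

theorem contDiff_symm (Φ : AmbientIsotopy n E) (s : ℝ) : ContDiff ℝ n (Φ s).symm :=
  Φ.contDiff_symm_uncurry.comp (contDiff_id.prodMk contDiff_const)

theorem tendsto_apply (Φ : AmbientIsotopy n E) (z : E) :
    Tendsto (fun q : ℝ × E => Φ q.1 q.2) (𝓝 (0, z)) (𝓝 z) := by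
  have hcont : Continuous fun q : ℝ × E => Φ q.1 q.2 :=
    Φ.contDiff_uncurry.continuous.comp continuous_swap
  simpa only [Φ.toHomeomorph_zero] using hcont.tendsto (0, z)

theorem tendsto_symm_apply (Φ : AmbientIsotopy n E) (z : E) :
    Tendsto (fun q : ℝ × E => (Φ q.1).symm q.2) (𝓝 (0, z)) (𝓝 z) := by
  have hcont : Continuous fun q : ℝ × E => (Φ q.1).symm q.2 :=
    Φ.contDiff_symm_uncurry.continuous.comp continuous_swap
  simpa only [Φ.symm_zero_apply] using hcont.tendsto (0, z)

theorem eventually_image_subset (Φ : AmbientIsotopy n E) {K U : Set E} (hK : IsCompact K)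
    (hU : IsOpen U) (hKU : K ⊆ U) : ∀ᶠ s in 𝓝 0, Φ s '' K ⊆ U := by
  simp only [image_subset_iff]
  exact hK.eventually_forall_of_forall_eventually fun z hz =>
    Φ.tendsto_apply z (hU.mem_nhds (hKU hz))

theorem eventually_subset_image (Φ : AmbientIsotopy n E) {K U : Set E} (hK : IsCompact K)
    (hU : IsOpen U) (hKU : K ⊆ U) : ∀ᶠ s in 𝓝 0, K ⊆ Φ s '' U := by
  simp only [Homeomorph.image_eq_preimage_symm]
  exact hK.eventually_forall_of_forall_eventually fun z hz =>
    Φ.tendsto_symm_apply z (hU.mem_nhds (hKU hz))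

theorem exists_of_displacement [CompleteSpace E] (hn : n ≠ 0) {G : E × ℝ → E}
    (hG : ContDiff ℝ n G) (hG0 : ∀ z, G (z, 0) = 0) {C : ℝ≥0} (hC : C < 1)
    (hLip : LipschitzWith C G) :
    ∃ Φ : AmbientIsotopy n E, ∀ s z, Φ s z = z + G (z, s) := by
  have hLip' : LipschitzWith C fun p => (G p, (0 : ℝ)) := by
    simpa using hLip.prodMk (LipschitzWith.const (0 : ℝ))
  obtain ⟨Ψ, hΨ, hΨsymm⟩ := exists_homeomorph_id_add hn (hG.prodMk contDiff_const) hC hLip'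
  have hΨ_apply (z : E) (s : ℝ) : Ψ (z, s) = (z + G (z, s), s) := by simp [hΨ]
  have hΨsymm_snd (p : E × ℝ) : (Ψ.symm p).2 = p.2 := by
    simpa [hΨ] using congrArg Prod.snd (Ψ.apply_symm_apply p)
  have hΨsymm_eq (z : E) (s : ℝ) : ((Ψ.symm (z, s)).1, s) = Ψ.symm (z, s) :=
    Prod.ext rfl (hΨsymm_snd (z, s)).symm
  have hslice (s : ℝ) : ContDiff ℝ n fun z : E => (z, s) := contDiff_id.prodMk contDiff_const
  let slice (s : ℝ) : E ≃ₜ E :=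
    { toFun := fun z => z + G (z, s)
      invFun := fun z => (Ψ.symm (z, s)).1
      left_inv := fun z => by simp only [← hΨ_apply, Ψ.symm_apply_apply]
      right_inv := fun z => by
        have h := congrArg Prod.fst (hΨ_apply (Ψ.symm (z, s)).1 s)
        simpa only [hΨsymm_eq, Ψ.apply_symm_apply] using h.symm
      continuous_toFun := (contDiff_id.add (hG.comp (hslice s))).continuous
      continuous_invFun := (contDiff_fst.comp (hΨsymm.comp (hslice s))).continuous }
  exact ⟨⟨slice, fun z => by simp [slice, hG0], contDiff_fst.add hG, contDiff_fst.comp hΨsymm⟩,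
    fun _ _ => rfl⟩

end AmbientIsotopy

end AmbientIsotopy

section Extension

theorem inv_one_add_sq_mem_Icc (s : ℝ) : (1 + s ^ 2)⁻¹ ∈ Icc (0 : ℝ) 1 :=
  ⟨by positivity, inv_le_one_of_one_le₀ (le_add_of_nonneg_right (sq_nonneg s))⟩

theorem exists_tendsto_eventually_inv_one_add_pow_four_eq {δ : ℝ} (hδ : 0 < δ) :
    ∃ σ : ℝ → ℝ, Tendsto σ (𝓝[<] 1) (𝓝 0) ∧
      ∀ᶠ r in 𝓝[<] (1 : ℝ), (1 + ((δ * Real.sin (σ r)) ^ 2) ^ 2)⁻¹ = r := by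
  have hτ : Tendsto (fun r : ℝ => √(√(r⁻¹ - 1)) / δ) (𝓝[<] 1) (𝓝 0) := by
    have hinv : ContinuousAt (fun r : ℝ => r⁻¹ - 1) 1 :=
      (continuousAt_inv₀ one_ne_zero).sub continuousAt_const
    simpa using (hinv.sqrt.sqrt.div_const δ).tendsto.mono_left nhdsWithin_le_nhds
  refine ⟨fun r => Real.arcsin (√(√(r⁻¹ - 1)) / δ), ?_, ?_⟩
  · simpa only [Real.arcsin_zero, Function.comp_def] using
      (Real.continuous_arcsin.tendsto 0).comp hτ
  · filter_upwards [hτ.eventually (ge_mem_nhds zero_lt_one), Ioo_mem_nhdsLT (zero_lt_one' ℝ)]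
      with r hτr hr
    have hr_inv : 0 ≤ r⁻¹ - 1 := sub_nonneg.2 ((one_le_inv₀ hr.1).2 hr.2.le)
    have hτ_nonneg : 0 ≤ √(√(r⁻¹ - 1)) / δ := by positivity
    rw [Real.sin_arcsin (neg_one_lt_zero.le.trans hτ_nonneg) hτr, mul_div_cancel₀ _ hδ.ne',
      Real.sq_sqrt (Real.sqrt_nonneg _), Real.sq_sqrt hr_inv, add_sub_cancel, inv_inv]

/-- Near `r = 1` the parameter is `s = σ r` with `r = (1 + (δ sin s)⁴)⁻¹`: the map
`u ↦ (1 + u²)⁻¹` sends the whole line into `[0, 1]`, where `γ` is defined. -/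
theorem AmbientIsotopy.exists_extending {E : Type*} [NormedAddCommGroup E] [NormedSpace ℝ E]
    [FiniteDimensional ℝ E] {n : ℕ∞} (hn : 1 ≤ n) {B : Set E} (hBc : IsCompact B)
    (hB : IsLocalRetract n B) {γ : E × ℝ → E} (hγ : ContDiffOn ℝ n γ (B ×ˢ Icc 0 1))
    (hγ1 : ∀ x ∈ B, γ (x, 1) = x) :
    ∃ (Φ : AmbientIsotopy n E) (σ : ℝ → ℝ), Tendsto σ (𝓝[<] 1) (𝓝 0) ∧
      ∀ᶠ r in 𝓝[<] 1, ∀ x ∈ B, Φ (σ r) x = γ (x, r) := by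
  have : ProperSpace E := FiniteDimensional.proper_real E
  have : CompleteSpace E := FiniteDimensional.complete ℝ E
  have hn' : (1 : WithTop ℕ∞) ≤ n := by exact_mod_cast hn
  have hparam : ContDiff ℝ n fun p : E × ℝ => (p.1, (1 + p.2 ^ 2)⁻¹) :=
    contDiff_fst.prodMk ((contDiff_const.add (contDiff_snd.pow 2)).inv fun p => by positivity)
  have hdisp : ContDiffOn ℝ n (fun p : E × ℝ => γ (p.1, (1 + p.2 ^ 2)⁻¹) - p.1)
      (B ×ˢ univ) :=
    (hγ.comp hparam.contDiffOn fun p hp => ⟨hp.1, inv_one_add_sq_mem_Icc p.2⟩).sub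
      contDiffOn_fst
  obtain ⟨H, hH, hHγ, hH0, R, hHR⟩ := hB.exists_contDiff_extension_prod hBc hdisp
    fun x hx => by simp [hγ1 x hx]
  obtain ⟨δ, hδ, hLip⟩ := exists_lipschitzWith_comp_sin_sq (hH.of_le hn') hH0 hHR
    (C := 1 / 2) (by positivity)
  obtain ⟨Φ, hΦ⟩ := AmbientIsotopy.exists_of_displacement (zero_lt_one.trans_le hn').ne'
    (hH.comp (contDiff_fst.prodMk ((contDiff_const.mul contDiff_snd.sin).pow 2)))
    (fun z => by simp [hH0]) one_half_lt_one hLip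
  obtain ⟨σ, hσ, hσr⟩ := exists_tendsto_eventually_inv_one_add_pow_four_eq hδ
  refine ⟨Φ, σ, hσ, hσr.mono fun r hr x hx => ?_⟩
  simp only [hΦ, Function.comp_apply, hHγ (mk_mem_prod hx (mem_univ _)), hr,
    add_sub_cancel]

end Extension

section DefiningFunction

variable {N : ℕ} {D V : Set (EN N)} {ρ : EN N → ℝ} {z : EN N}

namespace IsDefiningFunctionOn

theorem mem_iff (h : IsDefiningFunctionOn D ρ V) : z ∈ D ↔ z ∈ V ∧ ρ z < 0 :=
  Set.ext_iff.1 h.2.2.2.1 z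

theorem contDiffAt (h : IsDefiningFunctionOn D ρ V) (hz : z ∈ V) : ContDiffAt ℝ 2 ρ z :=
  h.2.2.1.contDiffAt (h.1.mem_nhds hz)

theorem isOpen_domain (h : IsDefiningFunctionOn D ρ V) : IsOpen D := by
  obtain ⟨hV, -, hρ, hD, -⟩ := h
  rw [hD]
  exact hρ.continuousOn.isOpen_inter_preimage hV isOpen_Iio

theorem mem_of_mem_frontier (h : IsDefiningFunctionOn D ρ V) (hz : z ∈ frontier D) : z ∈ V :=
  h.2.1 (frontier_subset_closure hz)

theorem fderiv_ne_zero (h : IsDefiningFunctionOn D ρ V) (hz : z ∈ frontier D) :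
    fderiv ℝ ρ z ≠ 0 :=
  h.2.2.2.2 z hz

theorem eq_zero_of_mem_frontier (h : IsDefiningFunctionOn D ρ V) (hz : z ∈ frontier D) :
    ρ z = 0 := by
  have hzV : z ∈ V := h.mem_of_mem_frontier hz
  refine le_antisymm ?_ ?_
  · have hcont : ContinuousWithinAt ρ D z := (h.contDiffAt hzV).continuousAt.continuousWithinAt
    simpa using hcont.mem_closure (frontier_subset_closure hz) (t := Iic 0)
      fun y hy => (h.mem_iff.1 hy).2.le
  · have hzD : z ∉ D := (h.isOpen_domain.frontier_eq ▸ hz).2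
    exact not_lt.1 fun hneg => hzD (h.mem_iff.2 ⟨hzV, hneg⟩)

theorem mem_frontier_of_eq_zero (h : IsDefiningFunctionOn D ρ V) (hz : z ∈ V) (hρz : ρ z = 0)
    (hdρ : fderiv ℝ ρ z ≠ 0) : z ∈ frontier D := by
  have hzD : z ∉ D := fun hzD => (h.mem_iff.1 hzD).2.ne hρz
  rw [h.isOpen_domain.frontier_eq]
  refine ⟨by_contra fun hcl => hdρ (IsLocalMin.fderiv_eq_zero ?_), hzD⟩
  filter_upwards [isClosed_closure.isOpen_compl.mem_nhds hcl, h.1.mem_nhds hz] with y hyD hyV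
  rw [hρz]
  exact not_lt.1 fun hneg => hyD (subset_closure (h.mem_iff.2 ⟨hyV, hneg⟩))

theorem isOpen_regular (h : IsDefiningFunctionOn D ρ V) :
    IsOpen {z ∈ V | fderiv ℝ ρ z ≠ 0} :=
  (h.2.2.1.continuousOn_fderiv_of_isOpen h.1 one_le_two).isOpen_inter_preimage h.1 isOpen_ne

theorem isLocalRetract_frontier (h : IsDefiningFunctionOn D ρ V) :
    IsLocalRetract 2 (frontier D) := by
  intro x₀ hx₀
  have hx₀V : x₀ ∈ V := h.mem_of_mem_frontier hx₀
  have hdρ : fderiv ℝ ρ x₀ ≠ 0 := h.fderiv_ne_zero hx₀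
  obtain ⟨π, hπ, hπρ, hfix⟩ :=
    exists_retraction_onto_level_set two_ne_zero (h.contDiffAt hx₀V) hdρ
  rw [h.eq_zero_of_mem_frontier hx₀] at hπρ hfix
  have hregular : ∀ᶠ z in 𝓝 x₀, z ∈ V ∧ fderiv ℝ ρ z ≠ 0 :=
    h.isOpen_regular.mem_nhds ⟨hx₀V, hdρ⟩
  have hπ_tendsto : Tendsto π (𝓝 x₀) (𝓝 x₀) := by
    simpa only [hfix.self_of_nhds (h.eq_zero_of_mem_frontier hx₀)] using hπ.continuousAt.tendsto
  obtain ⟨U, hU, hπU⟩ := hπ.contDiffOn le_rfl (by simp)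
  refine ⟨_, inter_mem hU ((hπρ.and hfix).and (hπ_tendsto.eventually hregular)), π,
    hπU.mono inter_subset_left, fun z hz => ?_, fun z hz => ?_⟩
  · obtain ⟨-, ⟨hπz, -⟩, hπzV, hdπz⟩ := hz
    exact h.mem_frontier_of_eq_zero hπzV hπz hdπz
  · obtain ⟨⟨-, ⟨-, hπz⟩, -⟩, hzD⟩ := hz
    exact hπz (h.eq_zero_of_mem_frontier hzD)

theorem closure_subset_union_regular (h : IsDefiningFunctionOn D ρ V) :
    closure D ⊆ D ∪ {z ∈ V | fderiv ℝ ρ z ≠ 0} := by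
  rw [closure_eq_self_union_frontier]
  exact union_subset_union_right D fun z hz =>
    ⟨h.mem_of_mem_frontier hz, h.fderiv_ne_zero hz⟩

/-- Otherwise `ρ` attains its maximum over the compact set `D' \ D = closure D' \ D`; as `ρ < 0`
on `D`, this is a local maximum of `ρ`, where `dρ` must vanish. -/
theorem subset_of_frontier_subset (h : IsDefiningFunctionOn D ρ V) {D' : Set (EN N)}
    (hD' : IsOpen D') (hbdd : Bornology.IsBounded D') (hfr : frontier D' ⊆ D)
    (hD'D : D' ⊆ D ∪ {z ∈ V | fderiv ℝ ρ z ≠ 0}) : D' ⊆ D := by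
  have hregular : ∀ z ∈ D' \ D, z ∈ V ∧ fderiv ℝ ρ z ≠ 0 := fun z hz =>
    (hD'D hz.1).resolve_left hz.2
  have hcompact : IsCompact (D' \ D) := by
    have hclosure : D' \ D = closure D' \ D := by
      rw [closure_eq_self_union_frontier, union_sdiff_distrib, sdiff_eq_empty.2 hfr, union_empty]
    rw [hclosure]
    exact hbdd.isCompact_closure.diff h.isOpen_domain
  have hcont : ContinuousOn ρ (D' \ D) := fun z hz =>
    (h.contDiffAt (hregular z hz).1).continuousAt.continuousWithinAt
  rw [← sdiff_eq_empty, ← not_nonempty_iff_eq_empty]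
  intro hne
  obtain ⟨p, hp, hmax⟩ := hcompact.exists_isMaxOn hne hcont
  have hρp : 0 ≤ ρ p := not_lt.1 fun hneg => hp.2 (h.mem_iff.2 ⟨(hregular p hp).1, hneg⟩)
  refine (hregular p hp).2 (IsLocalMax.fderiv_eq_zero ?_)
  filter_upwards [hD'.mem_nhds hp.1] with y hy
  by_cases hyD : y ∈ D
  · exact (h.mem_iff.1 hyD).2.le.trans hρp
  · exact hmax ⟨hy, hyD⟩

end IsDefiningFunctionOn

end DefiningFunction

section LeviStability

theorem contDiffAt_fderiv_partial {E F P : Type*} [NormedAddCommGroup E] [NormedSpace ℝ E]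
    [NormedAddCommGroup F] [NormedSpace ℝ F] [NormedAddCommGroup P] [NormedSpace ℝ P]
    {f : E × P → F} {p₀ : E × P} {m n : WithTop ℕ∞} (hf : ContDiffAt ℝ n f p₀)
    (hmn : m + 1 ≤ n) :
    ContDiffAt ℝ m (fun p => fderiv ℝ (fun y => f (y, p.2)) p.1) p₀ := by
  refine ContDiffAt.fderiv (f := fun p y => f (y, p.2)) (ContDiffAt.comp (p₀, p₀.1) hf ?_)
    contDiffAt_fst hmn
  exact contDiffAt_snd.prodMk (contDiffAt_snd.comp _ contDiffAt_fst)

variable {N : ℕ} {ρ : EN N → ℝ} {p w : EN N} {P : Type*} [NormedAddCommGroup P]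
  [NormedSpace ℝ P]

theorem ComplexTangent.smul (h : ComplexTangent ρ p w) (t : ℝ) : ComplexTangent ρ p (t • w) := by
  refine ⟨?_, ?_⟩
  · rw [map_smul, h.1, smul_zero]
  · rw [smul_comm, map_smul, h.2, smul_zero]

theorem leviForm_smul (ρ : EN N → ℝ) (p w : EN N) (t : ℝ) :
    LeviForm ρ p (t • w) = t ^ 2 * LeviForm ρ p w := by
  simp only [LeviForm, Hess, smul_comm Complex.I t w, map_smul, smul_apply, smul_eq_mul]
  ring

/-- The pointwise condition on a defining function at a boundary point: `dρ(p) ≠ 0` and the Levi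
form is positive definite on the complex tangent space. -/
def StrictlyPseudoconvexAt (ρ : EN N → ℝ) (p : EN N) : Prop :=
  fderiv ℝ ρ p ≠ 0 ∧ ∀ w : EN N, w ≠ 0 → ComplexTangent ρ p w → 0 < LeviForm ρ p w

theorem leviForm_pos_of_forall_sphere
    (h : ∀ w ∈ sphere (0 : EN N) 1, ComplexTangent ρ p w → 0 < LeviForm ρ p w) (hw : w ≠ 0)
    (hwT : ComplexTangent ρ p w) : 0 < LeviForm ρ p w := by
  have hunit : ‖w‖⁻¹ • w ∈ sphere (0 : EN N) 1 := by
    rw [mem_sphere_zero_iff_norm, norm_smul, norm_inv, norm_norm,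
      inv_mul_cancel₀ (norm_ne_zero_iff.2 hw)]
  have hpos := h _ hunit (hwT.smul _)
  rw [leviForm_smul] at hpos
  exact pos_of_mul_pos_right hpos (sq_nonneg _)

theorem eventually_leviForm_pos {R : EN N × P → ℝ} {p₀ : EN N × P} (hR : ContDiffAt ℝ 2 R p₀)
    {w₀ : EN N} (h : ComplexTangent (fun y => R (y, p₀.2)) p₀.1 w₀ →
      0 < LeviForm (fun y => R (y, p₀.2)) p₀.1 w₀) :
    ∀ᶠ q : (EN N × P) × EN N in 𝓝 (p₀, w₀),
      ComplexTangent (fun y => R (y, q.1.2)) q.1.1 q.2 →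
        0 < LeviForm (fun y => R (y, q.1.2)) q.1.1 q.2 := by
  have hA := contDiffAt_fderiv_partial (m := 1) hR (by norm_num)
  have hB := contDiffAt_fderiv_partial (m := 0) hA (by norm_num)
  have hd : ContinuousAt (fun q : (EN N × P) × EN N =>
      fderiv ℝ (fun y => R (y, q.1.2)) q.1.1) (p₀, w₀) :=
    ContinuousAt.comp (f := Prod.fst) (x := (p₀, w₀)) hA.continuousAt continuousAt_fst
  have hHess : ContinuousAt (fun q : (EN N × P) × EN N =>
      fderiv ℝ (fderiv ℝ fun y => R (y, q.1.2)) q.1.1) (p₀, w₀) :=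
    ContinuousAt.comp (f := Prod.fst) (x := (p₀, w₀)) hB.continuousAt continuousAt_fst
  have hw : ContinuousAt (fun q : (EN N × P) × EN N => q.2) (p₀, w₀) := continuousAt_snd
  have hIw := hw.const_smul Complex.I
  by_cases hT : ComplexTangent (fun y => R (y, p₀.2)) p₀.1 w₀
  · have hLevi := (((hHess.clm_apply hw).clm_apply hw).add
      ((hHess.clm_apply hIw).clm_apply hIw)).div_const 4
    exact (hLevi.eventually (lt_mem_nhds (h hT))).mono fun _ hq _ => hq
  · rcases not_and_or.1 hT with hne | hne
    · exact ((hd.clm_apply hw).eventually_ne hne).mono fun _ hq hqT => absurd hqT.1 hq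
    · exact ((hd.clm_apply hIw).eventually_ne hne).mono fun _ hq hqT => absurd hqT.2 hq

theorem StrictlyPseudoconvexAt.eventually {R : EN N × P → ℝ} {p₀ : EN N × P}
    (hR : ContDiffAt ℝ 2 R p₀) (h : StrictlyPseudoconvexAt (fun y => R (y, p₀.2)) p₀.1) :
    ∀ᶠ p in 𝓝 p₀, StrictlyPseudoconvexAt (fun y => R (y, p.2)) p.1 := by
  have hsphere : ∀ᶠ p in 𝓝 p₀, ∀ w ∈ sphere (0 : EN N) 1,
      ComplexTangent (fun y => R (y, p.2)) p.1 w → 0 < LeviForm (fun y => R (y, p.2)) p.1 w :=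
    (isCompact_sphere 0 1).eventually_forall_of_forall_eventually fun w hw =>
      eventually_leviForm_pos hR (h.2 w (ne_of_mem_sphere hw one_ne_zero))
  have hd := (contDiffAt_fderiv_partial (m := 1) hR (by norm_num)).continuousAt
  filter_upwards [hd.eventually_ne h.1, hsphere] with p hdp hp
  exact ⟨hdp, fun w => leviForm_pos_of_forall_sphere hp⟩

end LeviStability

section Stability

variable {N : ℕ} {D V : Set (EN N)} {ρ : EN N → ℝ}

theorem StrictPSCWith.isCompact_frontier (h : StrictPSCWith D ρ) : IsCompact (frontier D) :=
  isCompact_of_isClosed_isBounded isClosed_frontier (h.2.1.closure.subset frontier_subset_closure)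

theorem IsDefiningFunctionOn.image (h : IsDefiningFunctionOn D ρ V) (φ : EN N ≃ₜ EN N)
    (hφ : ContDiff ℝ 2 φ.symm) (hd : ∀ p ∈ frontier (φ '' D), fderiv ℝ (ρ ∘ φ.symm) p ≠ 0) :
    IsDefiningFunctionOn (φ '' D) (ρ ∘ φ.symm) (φ '' V) := by
  refine ⟨φ.isOpenMap V h.1, ?_, ?_, ?_, hd⟩
  · rw [← φ.image_closure]
    exact image_mono h.2.1
  · rw [φ.image_eq_preimage_symm]
    exact h.2.2.1.comp hφ.contDiffOn fun y hy => hy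
  · ext y
    simp only [φ.image_eq_preimage_symm, mem_preimage, mem_ofPred_eq, Function.comp_apply,
      h.mem_iff]

theorem IsDefiningFunctionOn.eventually_strictlyPseudoconvexAt_image
    (h : IsDefiningFunctionOn D ρ V) (hD : IsCompact (frontier D))
    (hρ : ∀ p ∈ frontier D, StrictlyPseudoconvexAt ρ p) (Φ : AmbientIsotopy 2 (EN N)) :
    ∀ᶠ s in 𝓝 0, ∀ p ∈ frontier (Φ s '' D), StrictlyPseudoconvexAt (ρ ∘ (Φ s).symm) p := by
  simp only [← Homeomorph.image_frontier, forall_mem_image]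
  refine hD.eventually_forall_of_forall_eventually fun p hp => ?_
  have hR : ContDiffAt ℝ 2 (fun q : EN N × ℝ => ρ ((Φ q.2).symm q.1)) (p, 0) := by
    refine ContDiffAt.comp (p, (0 : ℝ)) ?_ Φ.contDiff_symm_uncurry.contDiffAt
    simpa only [Φ.symm_zero_apply] using h.contDiffAt (h.mem_of_mem_frontier hp)
  have hp₀ : StrictlyPseudoconvexAt (fun y => ρ ((Φ 0).symm y)) p := by
    simpa only [Φ.symm_zero_apply] using hρ p hp
  have htendsto : Tendsto (fun q : ℝ × EN N => (Φ q.1 q.2, q.1)) (𝓝 (0, p)) (𝓝 (p, 0)) :=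
    (Φ.tendsto_apply p).prodMk_nhds continuousAt_fst
  exact htendsto.eventually (StrictlyPseudoconvexAt.eventually hR hp₀)

theorem StrictPSCWith.eventually_image (h : StrictPSCWith D ρ) (Φ : AmbientIsotopy 2 (EN N)) :
    ∀ᶠ s in 𝓝 0, StrictPSCWith (Φ s '' D) (ρ ∘ (Φ s).symm) := by
  have ⟨⟨hDo, hDc⟩, hDb, ⟨V, hV⟩, hlevi⟩ := h
  filter_upwards [hV.eventually_strictlyPseudoconvexAt_image h.isCompact_frontier
    (fun p hp => ⟨hV.fderiv_ne_zero hp, hlevi p hp⟩) Φ] with s hs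
  have hbdd : Bornology.IsBounded (Φ s '' D) :=
    (hDb.isCompact_closure.image (Φ s).continuous).isBounded.subset (image_mono subset_closure)
  exact ⟨⟨(Φ s).isOpenMap D hDo, hDc.image _ (Φ s).continuous.continuousOn⟩, hbdd,
    ⟨Φ s '' V, hV.image (Φ s) (Φ.contDiff_symm s) fun p hp => (hs p hp).1⟩,
    fun p hp => (hs p hp).2⟩

theorem StrictPSCWith.eventually_image_subset (h : StrictPSCWith D ρ)
    (Φ : AmbientIsotopy 2 (EN N)) :
    ∀ᶠ s in 𝓝 0, frontier (Φ s '' D) ⊆ D → Φ s '' D ⊆ D := by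
  have ⟨_, hDb, ⟨V, hV⟩, _⟩ := h
  filter_upwards [h.eventually_image Φ, Φ.eventually_image_subset hDb.isCompact_closure
    (hV.isOpen_domain.union hV.isOpen_regular) hV.closure_subset_union_regular] with s hpsc hs hfr
  exact hV.subset_of_frontier_subset hpsc.1.1 hpsc.2.1 hfr ((image_mono subset_closure).trans hs)

end Stability

theorem gamma_level_sets_strictly_pseudoconvex_general {N : ℕ} {D : Set (EN N)}
    (hD : StrictlyPseudoconvex D) {γ : EN N × ℝ → EN N}
    (hγ : ContDiffOn ℝ 2 γ (frontier D ×ˢ Icc 0 1))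
    (hγD : ∀ x ∈ frontier D, ∀ r ∈ Ico (0 : ℝ) 1, γ (x, r) ∈ D)
    (hγ1 : ∀ x ∈ frontier D, γ (x, 1) = x) {K : Set (EN N)} (hK : IsCompact K) (hKD : K ⊆ D) :
    ∃ r₀ ∈ Ioo (0 : ℝ) 1, ∀ r ∈ Ioo r₀ 1, ∃ D' : Set (EN N), StrictlyPseudoconvex D' ∧
      D' ⊆ D ∧ K ⊆ D' ∧ frontier D' = (fun x => γ (x, r)) '' frontier D := by
  obtain ⟨ρ, hDρ⟩ := hD
  have ⟨_, _, ⟨V, hV⟩, _⟩ := hDρ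
  obtain ⟨Φ, σ, hσ, hΦγ⟩ := AmbientIsotopy.exists_extending (n := 2) one_le_two
    hDρ.isCompact_frontier hV.isLocalRetract_frontier hγ hγ1
  have hnear : ∀ᶠ r in 𝓝[<] (1 : ℝ), ∃ D' : Set (EN N), StrictlyPseudoconvex D' ∧
      D' ⊆ D ∧ K ⊆ D' ∧ frontier D' = (fun x => γ (x, r)) '' frontier D := by
    filter_upwards [hσ.eventually (hDρ.eventually_image Φ),
      hσ.eventually (hDρ.eventually_image_subset Φ),
      hσ.eventually (Φ.eventually_subset_image hK hV.isOpen_domain hKD), hΦγ,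
      Ioo_mem_nhdsLT (zero_lt_one' ℝ)] with r hpsc hsub hKr hγr hr
    have hfr : frontier (Φ (σ r) '' D) = (fun x => γ (x, r)) '' frontier D := by
      rw [← Homeomorph.image_frontier]
      exact image_congr hγr
    refine ⟨Φ (σ r) '' D, ⟨_, hpsc⟩, hsub ?_, hKr, hfr⟩
    rw [hfr, image_subset_iff]
    exact fun x hx => hγD x hx r ⟨hr.1.le, hr.2⟩
  obtain ⟨l, hl, hlr⟩ := mem_nhdsLT_iff_exists_Ioo_subset.1 hnear
  exact ⟨max l (1 / 2), ⟨lt_max_of_lt_right one_half_pos, max_lt hl one_half_lt_one⟩,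
    fun r hr => hlr ⟨(le_max_left _ _).trans_lt hr.1, hr.2⟩⟩

/-- If `D` is strictly pseudoconvex with defining function `ρ` and `γ : bD × [0,1] → cl D`
is `C²`, maps into `D` for `r < 1`, satisfies `γ(x,1) = x` and hits `bD` transversally, then
for every compact `K ⊆ D` there is `r₀ ∈ (0,1)` such that for every `r ∈ (r₀,1)`, the set
`bD_r = γ(bD × {r})` is the boundary of a strictly pseudoconvex domain contained in `D` and
containing `K`. -/
theorem gamma_level_sets_strictly_pseudoconvex {N : ℕ} (D : Set (EN N)) (ρ : EN N → ℝ)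
    (hD : StrictPSCWith D ρ) (γ : EN N × ℝ → EN N) (hγ : GammaMap D ρ γ 2)
    (K : Set (EN N)) (hK : IsCompact K) (hKD : K ⊆ D) :
    ∃ r₀ ∈ Ioo (0:ℝ) 1, ∀ r ∈ Ioo r₀ 1,
      ∃ D' : Set (EN N), StrictlyPseudoconvex D' ∧ D' ⊆ D ∧ K ⊆ D' ∧
        frontier D' = (fun x => γ (x, r)) '' frontier D := by
  obtain ⟨hγC, hγD, hγ1, -⟩ := hγ
  exact gamma_level_sets_strictly_pseudoconvex_general ⟨ρ, hD⟩ hγC hγD hγ1 hK hKD
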